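/- arXiv:2405.08532 — 3 statements merged into one kernel-verified Lean document; each statement's English description precedes it below -/
import Mathlib

section
/- Let α ∈ (0,1)^d be a totally irrational frequency vector. For every hypercubic billiard sequence u with frequency α, the discrepancy satisfies (1 + (d−2)‖α‖_∞)/2 ≤ Δ_α(u) ≤ 1 + (d−2)‖α‖_∞; in particular Δ_α(u) ≤ d − 1 and Δ_α(u) ≥ (d−1)/d. -/
open scoped ENNReal

/-- Projection onto `1^⊥` along `ℝα`: `π_α(x) = x - (Σ x_i) • α`, so `π_α(e_i) = e_i - α`. -/
noncomputable def piAlpha {d : ℕ} (α : Fin d → ℝ) (x : Fin d → ℝ) : Fin d → ℝ :=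
  x - (∑ j, x j) • α

/-- `E_{α,i} = π_α(F_i)`, the projection of the upper face `F_i` of the unit cube. -/
noncomputable def Ealphai {d : ℕ} (α : Fin d → ℝ) (i : Fin d) : Set (Fin d → ℝ) :=
  piAlpha α '' {x | x ∈ Set.Icc (0 : Fin d → ℝ) 1 ∧ x i = 1}

/-- `E_α = π_α([0,1]^d)`. -/
noncomputable def Ealpha {d : ℕ} (α : Fin d → ℝ) : Set (Fin d → ℝ) :=
  piAlpha α '' Set.Icc (0 : Fin d → ℝ) 1

/-!
The orbit stays in `E_α`, and the discrepancy is the radius of the smallest ball about `x 0` that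
contains it; so it is at most the diameter of `E_α`. If the orbit is dense in `E_α`, then the
diameter of `E_α` is in turn at most twice the discrepancy. In the sup norm this diameter is
`1 + (d - 2)‖α‖`, attained between `π_α(e_i)` and `π_α(1 - e_i)` for the largest coordinate `α i`.

For density, lift the orbit to the line `x 0 + ℝα` modulo `ℤ^d`. For all but countably many `τ`, the
numbers `1, τα_1, …, τα_d` are rationally independent, so already the points `x 0 + nτα` are dense
modulo `ℤ^d` by Kronecker's theorem, and the line enters every open piece of the unit cube. The
point of entry `x 0 + tα - v`, with `v ∈ ℤ^d`, projects to `x 0 + nα - v` with `n = ∑ v_i`, which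
differs from `x n` by an integer vector of sum `0`, hence equals `x n`: no two points of `E_α`
differ by a nonzero such vector when one of them comes from the open cube.

Kronecker's theorem itself follows from unique ergodicity of torus rotations: a measure invariant
under a rotation fixing no nontrivial character has all nontrivial Fourier coefficients zero.
-/

section Kronecker

open MeasureTheory UnitAddTorus

variable {ι : Type*} [Fintype ι]

lemma mFourier_add_apply (k : ι → ℤ) (y z : UnitAddTorus ι) :
    mFourier k (y + z) = mFourier k y * mFourier k z := by
  simp [mFourier, fourier_apply, AddCircle.toCircle_add, Finset.prod_mul_distrib]

lemma mFourier_coe_apply (k : ι → ℤ) (a : ι → ℝ) :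
    mFourier k (fun i => (a i : UnitAddCircle)) =
      Complex.exp ((∑ i, k i * a i : ℝ) * (2 * Real.pi * Complex.I)) := by
  simp only [mFourier, ContinuousMap.coe_mk, fourier_coe_apply, ← Complex.exp_sum]
  push_cast
  rw [Finset.sum_mul]
  exact congrArg Complex.exp (Finset.sum_congr rfl fun i _ => by ring)

lemma measure_ext_of_integral_mFourier {μ ν : Measure (UnitAddTorus ι)}
    [IsFiniteMeasure μ] [IsFiniteMeasure ν]
    (h : ∀ k, ∫ z, mFourier k z ∂μ = ∫ z, mFourier k z ∂ν) : μ = ν := by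
  have integrable (ρ : Measure (UnitAddTorus ι)) [IsFiniteMeasure ρ] (f : C(UnitAddTorus ι, ℂ)) :
      Integrable f ρ :=
    f.continuous.integrable_of_hasCompactSupport (.of_compactSpace _)
  have h_span (f : C(UnitAddTorus ι, ℂ)) (hf : f ∈ Submodule.span ℂ (Set.range mFourier)) :
      ∫ z, f z ∂μ = ∫ z, f z ∂ν := by
    induction hf using Submodule.span_induction with
    | mem f hf => obtain ⟨k, rfl⟩ := hf; exact h k
    | zero => simp
    | add f g _ _ hf hg =>
      simp only [ContinuousMap.add_apply]
      rw [integral_add (integrable μ f) (integrable μ g),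
        integral_add (integrable ν f) (integrable ν g), hf, hg]
    | smul c f _ hf => simp only [ContinuousMap.smul_apply, integral_smul, hf]
  let φ : BoundedContinuousFunction (UnitAddTorus ι) ℂ →⋆ₐ[ℂ] C(UnitAddTorus ι, ℂ) :=
    BoundedContinuousFunction.toContinuousMapStarₐ ℂ
  refine ext_of_forall_mem_subalgebra_integral_eq_of_polish (𝕜 := ℂ)
    (A := (mFourierSubalgebra ι).comap φ) ?_ fun f hf => h_span (φ f) ?_
  · intro x y hxy
    obtain ⟨_, ⟨f, hf, rfl⟩, hne⟩ := mFourierSubalgebra_separatesPoints hxy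
    exact ⟨_, ⟨f, ⟨BoundedContinuousFunction.mkOfCompact f, hf, rfl⟩, rfl⟩, hne⟩
  · rw [← mFourierSubalgebra_coe]
    exact hf

lemma integral_mFourier_eq_zero {μ : Measure (UnitAddTorus ι)} {b : UnitAddTorus ι}
    (hμ : MeasurePreserving (b + ·) μ μ) {k : ι → ℤ} (hk : mFourier k b ≠ 1) :
    ∫ z, mFourier k z ∂μ = 0 := by
  have h := hμ.integral_comp (measurableEmbedding_addLeft b) (mFourier k)
  simp only [mFourier_add_apply, integral_const_mul] at h
  exact (mul_left_eq_self₀.1 h).resolve_left hk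

theorem eq_of_measurePreserving_add_left {b : UnitAddTorus ι} (hb : ∀ k ≠ 0, mFourier k b ≠ 1)
    {μ ν : Measure (UnitAddTorus ι)} [IsProbabilityMeasure μ] [IsProbabilityMeasure ν]
    (hμ : MeasurePreserving (b + ·) μ μ) (hν : MeasurePreserving (b + ·) ν ν) : μ = ν := by
  refine measure_ext_of_integral_mFourier fun k => ?_
  obtain rfl | hk := eq_or_ne k 0
  · simp [mFourier_zero]
  · rw [integral_mFourier_eq_zero hμ (hb k hk), integral_mFourier_eq_zero hν (hb k hk)]

theorem denseRange_nsmul_of_mFourier_ne_one {b : UnitAddTorus ι}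
    (hb : ∀ k ≠ 0, mFourier k b ≠ 1) : DenseRange fun n : ℕ => n • b := by
  have : IsProbabilityMeasure (volume : Measure UnitAddCircle) := ⟨UnitAddCircle.measure_univ⟩
  have hvol : MeasurePreserving (b + ·) (volume : Measure (UnitAddTorus ι)) volume :=
    measurePreserving_add_left volume b
  have hergodic : Ergodic (b + ·) (volume : Measure (UnitAddTorus ι)) :=
    .of_mem_extremePoints ⟨⟨hvol, inferInstance⟩, by
      rintro μ ⟨hμ, _⟩ ν - -
      exact eq_of_measurePreserving_add_left hb hμ hvol⟩
  exact denseRange_zsmul_iff_nsmul.1 (.zsmul_of_ergodic_add_left hergodic)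

theorem denseRange_nsmul_coe {a : ι → ℝ}
    (ha : ∀ k : ι → ℤ, k ≠ 0 → ∀ m : ℤ, ∑ i, k i * a i ≠ m) :
    DenseRange fun n : ℕ => n • (fun i => a i : UnitAddTorus ι) := by
  refine denseRange_nsmul_of_mFourier_ne_one fun k hk h => ?_
  rw [mFourier_coe_apply, Complex.exp_eq_one_iff] at h
  obtain ⟨m, hm⟩ := h
  exact ha k hk m (by exact_mod_cast mul_right_cancel₀ Complex.two_pi_I_ne_zero hm)

lemma exists_pos_forall_sum_mul_ne_intCast {α : ι → ℝ} (hα : LinearIndependent ℤ α) :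
    ∃ τ : ℝ, 0 < τ ∧ ∀ k : ι → ℤ, k ≠ 0 → ∀ m : ℤ, ∑ i, k i * (τ * α i) ≠ m := by
  obtain ⟨τ, hτ, hτ_pos⟩ := ((Set.countable_range
    fun p : (ι → ℤ) × ℤ => p.2 / ∑ i, p.1 i * α i).dense_compl ℝ).exists_mem_open
      isOpen_Ioi (Set.nonempty_Ioi (a := 0))
  refine ⟨τ, hτ_pos, fun k hk m h => hτ ⟨(k, m), ?_⟩⟩
  have hsum : ∑ i, k i * α i ≠ 0 := fun h0 => hk <| funext <|
    Fintype.linearIndependent_iff.1 hα k (by simpa only [zsmul_eq_mul] using h0)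
  rw [div_eq_iff hsum, ← h, Finset.mul_sum]
  exact Finset.sum_congr rfl fun i _ => by ring

end Kronecker

theorem exists_add_smul_sub_intCast_mem {ι : Type*} [Finite ι] {α : ι → ℝ}
    (hα : LinearIndependent ℤ α) (y : ι → ℝ) {U : Set (ι → ℝ)} (hU : IsOpen U)
    (hU_nonempty : U.Nonempty) (T : ℝ) :
    ∃ t ≥ T, ∃ v : ι → ℤ, (y + t • α - fun i => (v i : ℝ)) ∈ U := by
  have := Fintype.ofFinite ι
  obtain ⟨τ, hτ_pos, hτ⟩ := exists_pos_forall_sum_mul_ne_intCast hα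
  let p : (ι → ℝ) → UnitAddTorus ι := Pi.map fun _ => (↑)
  have hp : IsOpenMap p := .piMap (fun _ => QuotientAddGroup.isOpenMap_coe)
    (.of_forall fun _ => QuotientAddGroup.mk_surjective)
  have hdense : DenseRange fun n : ℕ => n • p (τ • α) := denseRange_nsmul_coe hτ
  obtain ⟨n, z, hz, hzn⟩ := hdense.exists_mem_open
    (hp _ (hU.preimage (continuous_const_add (y + T • α))))
    ((hU_nonempty.preimage (add_left_surjective _)).image p)
  have hz_int (i : ι) : ∃ m : ℤ, (m : ℝ) = z i - n * (τ * α i) := by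
    have hcoe : (z i : UnitAddCircle) = ((n • (τ * α i) : ℝ) : UnitAddCircle) := congrFun hzn i
    rw [← sub_eq_zero, ← AddCircle.coe_sub, AddCircle.coe_eq_zero_iff] at hcoe
    simpa using hcoe
  choose m hm using hz_int
  refine ⟨T + n * τ, le_add_of_nonneg_right (by positivity), -m, ?_⟩
  convert! Set.mem_preimage.1 hz using 1
  ext i
  simp only [Pi.add_apply, Pi.sub_apply, Pi.smul_apply, Pi.neg_apply, smul_eq_mul, Int.cast_neg, hm]
  ring

lemma exists_norm_apply_eq_norm {ι : Type*} [Fintype ι] [Nonempty ι] {E : ι → Type*}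
    [∀ i, SeminormedAddGroup (E i)] (f : ∀ i, E i) : ∃ i, ‖f i‖ = ‖f‖ := by
  obtain ⟨i, hi⟩ := Finite.exists_max fun i => ‖f i‖
  exact ⟨i, (norm_le_pi_norm f i).antisymm ((pi_norm_le_iff_of_nonempty f).2 hi)⟩

section Geometry

variable {d : ℕ} {α : Fin d → ℝ}

lemma piAlpha_apply (z : Fin d → ℝ) (i : Fin d) :
    piAlpha α z i = z i - (∑ j, z j) * α i := rfl

lemma piAlpha_sub (z w : Fin d → ℝ) : piAlpha α (z - w) = piAlpha α z - piAlpha α w := by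
  ext i
  simp only [piAlpha_apply, Pi.sub_apply, Finset.sum_sub_distrib]
  ring

lemma continuous_piAlpha : Continuous (piAlpha α) := by
  unfold piAlpha
  fun_prop

lemma sum_piAlpha (hsum : ∑ i, α i = 1) (z : Fin d → ℝ) : ∑ i, piAlpha α z i = 0 := by
  simp [piAlpha_apply, ← Finset.mul_sum, hsum]

lemma piAlpha_add_smul_sub (hsum : ∑ i, α i = 1) {y : Fin d → ℝ} (hy : ∑ i, y i = 0) (t : ℝ)
    (v : Fin d → ℝ) : piAlpha α (y + t • α - v) = y + (∑ i, v i) • α - v := by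
  have : ∑ i, (y + t • α - v) i = t - ∑ i, v i := by
    simp [Finset.sum_add_distrib, ← Finset.mul_sum, hy, hsum]
  rw [piAlpha, this, sub_smul]
  abel

lemma Ealphai_subset_Ealpha (i : Fin d) : Ealphai α i ⊆ Ealpha α :=
  Set.image_mono fun _ hz => hz.1

lemma abs_piAlpha_le (hα : ∀ i, α i ∈ Set.Icc (0 : ℝ) 1) {z : Fin d → ℝ}
    (hz : ∀ j, |z j| ≤ 1) (i : Fin d) : |piAlpha α z i| ≤ 1 + (d - 2) * α i := by
  obtain ⟨hα0, hα1⟩ := hα i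
  have hrest : |∑ j ∈ Finset.univ.erase i, z j| ≤ d - 1 := by
    refine (Finset.abs_sum_le_sum_abs _ _).trans ((Finset.sum_le_sum fun j _ => hz j).trans ?_)
    simp [Nat.cast_sub (Nat.one_le_of_lt i.2)]
  calc |piAlpha α z i|
      = |(1 - α i) * z i - α i * ∑ j ∈ Finset.univ.erase i, z j| := by
        rw [piAlpha_apply, ← Finset.add_sum_erase _ _ (Finset.mem_univ i)]
        ring_nf
    _ ≤ (1 - α i) * |z i| + α i * |∑ j ∈ Finset.univ.erase i, z j| := by
        refine (abs_sub _ _).trans_eq ?_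
        rw [abs_mul, abs_mul, abs_of_nonneg (sub_nonneg.2 hα1), abs_of_nonneg hα0]
    _ ≤ (1 - α i) * 1 + α i * (d - 1) := by
        have := sub_nonneg.2 hα1
        gcongr
        exact hz i
    _ = 1 + (d - 2) * α i := by ring

lemma piAlpha_single_apply (i : Fin d) : piAlpha α (Pi.single i 1) i = 1 - α i := by
  simp [piAlpha_apply]

lemma piAlpha_one_sub_single_apply (i : Fin d) :
    piAlpha α (1 - Pi.single i 1) i = -((d - 1) * α i) := by
  simp [piAlpha_apply]

lemma ediam_Ealpha_le (hd : 2 ≤ d) (hα : ∀ i, α i ∈ Set.Icc (0 : ℝ) 1) :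
    Metric.ediam (Ealpha α) ≤ ENNReal.ofReal (1 + (d - 2) * ‖α‖) := by
  have hd' : (0 : ℝ) ≤ d - 2 := by simpa using hd
  refine Metric.ediam_le ?_
  rintro _ ⟨z, hz, rfl⟩ _ ⟨w, hw, rfl⟩
  have hzw (j : Fin d) : |(z - w) j| ≤ 1 := by
    simpa using abs_sub_le_of_le_of_le (hz.1 j) (hz.2 j) (hw.1 j) (hw.2 j)
  rw [edist_dist, dist_eq_norm, ← piAlpha_sub]
  refine ENNReal.ofReal_le_ofReal ((pi_norm_le_iff_of_nonneg (by positivity)).2 fun i => ?_)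
  calc ‖piAlpha α (z - w) i‖
      ≤ 1 + (d - 2) * α i := abs_piAlpha_le hα hzw i
    _ ≤ 1 + (d - 2) * ‖α‖ := by
      gcongr
      exact (le_abs_self _).trans (norm_le_pi_norm α i)

lemma le_ediam_Ealpha (α : Fin d → ℝ) (i : Fin d) :
    ENNReal.ofReal (1 + (d - 2) * α i) ≤ Metric.ediam (Ealpha α) := by
  have hmem : (Pi.single i 1 : Fin d → ℝ) ∈ Set.Icc 0 1 :=
    ⟨Pi.single_nonneg.2 zero_le_one, fun j => by by_cases hj : j = i <;> simp [hj]⟩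
  have hmem' : (1 - Pi.single i 1 : Fin d → ℝ) ∈ Set.Icc 0 1 :=
    ⟨sub_nonneg.2 hmem.2, sub_le_self _ hmem.1⟩
  calc ENNReal.ofReal (1 + (d - 2) * α i)
      = ENNReal.ofReal (piAlpha α (Pi.single i 1) i - piAlpha α (1 - Pi.single i 1) i) := by
        rw [piAlpha_single_apply, piAlpha_one_sub_single_apply]
        ring_nf
    _ ≤ edist (piAlpha α (Pi.single i 1) i) (piAlpha α (1 - Pi.single i 1) i) := by
        rw [edist_dist, Real.dist_eq]
        exact ENNReal.ofReal_le_ofReal (le_abs_self _)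
    _ ≤ edist (piAlpha α (Pi.single i 1)) (piAlpha α (1 - Pi.single i 1)) :=
        edist_le_pi_edist _ _ i
    _ ≤ Metric.ediam (Ealpha α) :=
        Metric.edist_le_ediam_of_mem ⟨_, hmem, rfl⟩ ⟨_, hmem', rfl⟩

theorem ediam_Ealpha (hd : 2 ≤ d) (hα : ∀ i, α i ∈ Set.Icc (0 : ℝ) 1) :
    Metric.ediam (Ealpha α) = ENNReal.ofReal (1 + (d - 2) * ‖α‖) := by
  have : Nonempty (Fin d) := ⟨⟨0, by omega⟩⟩
  obtain ⟨i, hi⟩ := exists_norm_apply_eq_norm α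
  refine le_antisymm (ediam_Ealpha_le hd hα) ?_
  rw [← hi, Real.norm_of_nonneg (hα i).1]
  exact le_ediam_Ealpha α i

lemma Icc_zero_one_subset_closure_pi_Ioo :
    Set.Icc (0 : Fin d → ℝ) 1 ⊆ closure (Set.univ.pi fun _ => Set.Ioo 0 1) := by
  simp [closure_pi_set, ← Set.pi_univ_Icc]

lemma piAlpha_eq_of_sub_eq_intCast (hα : ∀ i, 0 ≤ α i) (hsum : ∑ i, α i = 1)
    {z w : Fin d → ℝ} (hz : z ∈ Set.univ.pi fun _ => Set.Ioo 0 1) (hw : w ∈ Set.Icc 0 1)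
    {v : Fin d → ℤ} (hv : ∀ i, piAlpha α z i - piAlpha α w i = v i) :
    piAlpha α z = piAlpha α w := by
  have hsum_v : ∑ i, v i = 0 := by
    have : ∑ i, (v i : ℝ) = 0 := by simp [← hv, sum_piAlpha hsum]
    exact_mod_cast this
  have hdiff (i : Fin d) : (v i : ℝ) = z i - w i - (∑ j, z j - ∑ j, w j) * α i := by
    rw [← hv, piAlpha_apply, piAlpha_apply]
    ring
  suffices ∀ i, v i = 0 by ext i; simpa [this, sub_eq_zero] using hv i
  rcases le_total (∑ j, w j) (∑ j, z j) with h | h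
  · have hnonpos (i : Fin d) : v i ≤ 0 := by
      have hzi : z i < 1 := (hz i trivial).2
      have hwi : 0 ≤ w i := hw.1 i
      have : (v i : ℝ) < 1 := by linarith [hdiff i, mul_nonneg (sub_nonneg.2 h) (hα i)]
      exact Int.lt_add_one_iff.1 (by exact_mod_cast this)
    simpa using (Finset.sum_eq_zero_iff_of_nonpos fun i _ => hnonpos i).1 hsum_v
  · have hnonneg (i : Fin d) : 0 ≤ v i := by
      have hzi : 0 < z i := (hz i trivial).1
      have hwi : w i ≤ 1 := hw.2 i
      have : (-1 : ℝ) < v i := by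
        linarith [hdiff i, mul_nonneg (sub_nonneg.2 h) (hα i)]
      exact Int.add_one_le_iff.2 (by exact_mod_cast this)
    simpa using (Finset.sum_eq_zero_iff_of_nonneg fun i _ => hnonneg i).1 hsum_v

end Geometry

section Billiard

variable {d : ℕ} {α : Fin d → ℝ} {u : ℕ → Fin d} {x : ℕ → Fin d → ℝ}

/-- The abelianization `p(u_{[0,n)})` of the prefix of length `n` of `u`: `letterCount u n i` is
the number of occurrences of the letter `i` among `u 0, …, u (n - 1)`. -/
def letterCount {ι : Type*} [DecidableEq ι] (u : ℕ → ι) (n : ℕ) (i : ι) : ℕ :=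
  ((Finset.range n).filter fun k => u k = i).card

/-- The discrepancy `Δ_α(u)`, valued in `[0, ∞]` so that the supremum needs no boundedness. -/
noncomputable def discrepancy (α : Fin d → ℝ) (u : ℕ → Fin d) : ℝ≥0∞ :=
  ⨆ n : ℕ, ENNReal.ofReal ‖fun i => (letterCount u n i : ℝ) - n * α i‖

/-- `x` is the orbit of `x 0` under the exchange `T̃_α` and `u` is a coding of it. On the overlap of
two faces `E_{α,i}`, the letter may be chosen freely. -/
structure IsBilliardOrbit (α : Fin d → ℝ) (u : ℕ → Fin d) (x : ℕ → Fin d → ℝ) : Prop where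
  step (n : ℕ) : x (n + 1) = x n + α - Pi.single (u n) 1
  mem_Ealphai (n : ℕ) : x n ∈ Ealphai α (u n)

lemma letterCount_succ {ι : Type*} [DecidableEq ι] (u : ℕ → ι) (n : ℕ) :
    letterCount u (n + 1) = letterCount u n + Pi.single (u n) 1 := by
  ext i
  by_cases h : u n = i
  · subst h
    simp [letterCount, Finset.range_add_one, Finset.filter_insert]
  · simp [letterCount, Finset.range_add_one, Finset.filter_insert, h, Ne.symm h]

namespace IsBilliardOrbit

lemma mem_Ealpha (h : IsBilliardOrbit α u x) (n : ℕ) : x n ∈ Ealpha α :=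
  Ealphai_subset_Ealpha _ (h.mem_Ealphai n)

lemma apply_eq (h : IsBilliardOrbit α u x) (n : ℕ) (i : Fin d) :
    x n i = x 0 i + n * α i - letterCount u n i := by
  induction n with
  | zero => simp [letterCount]
  | succ n ih =>
    have hsingle : ((Pi.single (u n) 1 : Fin d → ℕ) i : ℝ) = (Pi.single (u n) 1 : Fin d → ℝ) i := by
      simp [Pi.single_apply]
    simp only [h.step, letterCount_succ, Pi.sub_apply, Pi.add_apply, ih, Nat.cast_add, Nat.cast_one,
      hsingle]
    ring

lemma discrepancy_eq_iSup_edist (h : IsBilliardOrbit α u x) :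
    discrepancy α u = ⨆ n, edist (x n) (x 0) := by
  refine iSup_congr fun n => ?_
  rw [edist_comm, edist_dist, dist_eq_norm]
  congr 2
  ext i
  rw [Pi.sub_apply, h.apply_eq n]
  ring

lemma sum_apply_eq_zero (h : IsBilliardOrbit α u x) (hsum : ∑ i, α i = 1) (n : ℕ) :
    ∑ i, x n i = 0 := by
  obtain ⟨w, -, hw⟩ := h.mem_Ealpha n
  rw [← hw, sum_piAlpha hsum]

lemma piAlpha_mem_range (h : IsBilliardOrbit α u x) (hα : ∀ i, 0 ≤ α i) (hsum : ∑ i, α i = 1)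
    {t : ℝ} (ht : d ≤ t) {v : Fin d → ℤ}
    (hcube : (x 0 + t • α - fun i => (v i : ℝ)) ∈ Set.univ.pi fun _ => Set.Ioo 0 1) :
    piAlpha α (x 0 + t • α - fun i => (v i : ℝ)) ∈ Set.range x := by
  have hx0 := h.sum_apply_eq_zero hsum 0
  obtain ⟨n, hn⟩ : ∃ n : ℕ, ∑ i, v i = n := by
    refine Int.eq_ofNat_of_zero_le ?_
    have hle : t - ∑ i, (v i : ℝ) ≤ d := by
      simpa [Finset.sum_add_distrib, ← Finset.mul_sum, hx0, hsum] using
        Finset.sum_le_sum fun i (_ : i ∈ Finset.univ) => (hcube i trivial).2.le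
    have : (0 : ℝ) ≤ ∑ i, (v i : ℝ) := by linarith
    exact_mod_cast this
  obtain ⟨w, hw, hwx⟩ := h.mem_Ealpha n
  refine ⟨n, ?_⟩
  rw [← hwx]
  refine (piAlpha_eq_of_sub_eq_intCast hα hsum hcube hw
    (v := fun i => letterCount u n i - v i) fun i => ?_).symm
  have hn' : ∑ i, (v i : ℝ) = n := by exact_mod_cast hn
  rw [piAlpha_add_smul_sub hsum hx0, hn', hwx, h.apply_eq n]
  simp only [Pi.sub_apply, Pi.add_apply, Pi.smul_apply, smul_eq_mul]
  push_cast
  ring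

theorem Ealpha_subset_closure_range (h : IsBilliardOrbit α u x) (hα : ∀ i, 0 ≤ α i)
    (hsum : ∑ i, α i = 1) (hind : LinearIndependent ℤ α) :
    Ealpha α ⊆ closure (Set.range x) := by
  refine (Set.image_mono Icc_zero_one_subset_closure_pi_Ioo).trans
    ((image_closure_subset_closure_image continuous_piAlpha).trans
      (closure_minimal ?_ isClosed_closure))
  rintro _ ⟨z, hz, rfl⟩
  refine mem_closure_iff.2 fun V hV hzV => ?_
  have hcube_open : IsOpen (Set.univ.pi fun _ : Fin d => Set.Ioo (0 : ℝ) 1) :=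
    isOpen_set_pi Set.finite_univ fun _ _ => isOpen_Ioo
  obtain ⟨t, ht, v, hvV, hv_cube⟩ := exists_add_smul_sub_intCast_mem hind (x 0)
    ((hV.preimage continuous_piAlpha).inter hcube_open) ⟨z, hzV, hz⟩ d
  exact ⟨_, hvV, h.piAlpha_mem_range hα hsum ht hv_cube⟩

theorem discrepancy_le_ediam (h : IsBilliardOrbit α u x) :
    discrepancy α u ≤ Metric.ediam (Ealpha α) := by
  rw [h.discrepancy_eq_iSup_edist]
  exact iSup_le fun n => Metric.edist_le_ediam_of_mem (h.mem_Ealpha n) (h.mem_Ealpha 0)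

theorem ediam_le_two_mul_discrepancy (h : IsBilliardOrbit α u x) (hα : ∀ i, 0 ≤ α i)
    (hsum : ∑ i, α i = 1) (hind : LinearIndependent ℤ α) :
    Metric.ediam (Ealpha α) ≤ 2 * discrepancy α u := by
  have hball : Set.range x ⊆ Metric.closedEBall (x 0) (discrepancy α u) := by
    rintro _ ⟨n, rfl⟩
    rw [h.discrepancy_eq_iSup_edist]
    exact le_iSup (fun n => edist (x n) (x 0)) n
  calc Metric.ediam (Ealpha α)
      ≤ Metric.ediam (closure (Set.range x)) :=
        Metric.ediam_mono (h.Ealpha_subset_closure_range hα hsum hind)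
    _ = Metric.ediam (Set.range x) := Metric.ediam_closure _
    _ ≤ Metric.ediam (Metric.closedEBall (x 0) (discrepancy α u)) := Metric.ediam_mono hball
    _ ≤ 2 * discrepancy α u := Metric.ediam_closedEBall_le

end IsBilliardOrbit

end Billiard

lemma one_div_card_le_norm_of_sum_eq_one {d : ℕ} [NeZero d] {α : Fin d → ℝ} (hsum : ∑ i, α i = 1) :
    1 / (d : ℝ) ≤ ‖α‖ := by
  rw [div_le_iff₀' (by simp [Nat.pos_of_neZero]), ← hsum]
  simpa using Finset.sum_le_sum fun i (_ : i ∈ Finset.univ) =>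
    (le_abs_self (α i)).trans (norm_le_pi_norm α i)

theorem billiard_discrepancy_bounds {d : ℕ} (hd : 2 ≤ d)
    (α : Fin d → ℝ) (hα : ∀ i, α i ∈ Set.Ioo (0:ℝ) 1) (hsum : ∑ i, α i = 1)
    (hirr : LinearIndependent ℚ α)
    (u : ℕ → Fin d) (x : ℕ → Fin d → ℝ)
    (hx0 : x 0 ∈ Ealpha α)
    (hrec : ∀ n : ℕ, x (n + 1) = x n + α - Pi.single (u n) 1)
    (hcode : ∀ n : ℕ, x n ∈ Ealphai α (u n)) :
    ENNReal.ofReal ((1 + ((d:ℝ) - 2) * ‖α‖) / 2)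
        ≤ (⨆ n : ℕ, ENNReal.ofReal
            ‖(fun i => (((Finset.range n).filter fun k => u k = i).card : ℝ) - (n:ℝ) * α i)‖)
    ∧ (⨆ n : ℕ, ENNReal.ofReal
          ‖(fun i => (((Finset.range n).filter fun k => u k = i).card : ℝ) - (n:ℝ) * α i)‖)
        ≤ ENNReal.ofReal (1 + ((d:ℝ) - 2) * ‖α‖)
    ∧ (⨆ n : ℕ, ENNReal.ofReal
          ‖(fun i => (((Finset.range n).filter fun k => u k = i).card : ℝ) - (n:ℝ) * α i)‖)
        ≤ ENNReal.ofReal ((d:ℝ) - 1)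
    ∧ ENNReal.ofReal (((d:ℝ) - 1) / d)
        ≤ (⨆ n : ℕ, ENNReal.ofReal
            ‖(fun i => (((Finset.range n).filter fun k => u k = i).card : ℝ) - (n:ℝ) * α i)‖) := by
  have horbit : IsBilliardOrbit α u x := ⟨hrec, hcode⟩
  have hα0 (i : Fin d) : 0 ≤ α i := (hα i).1.le
  have hdiam := ediam_Ealpha hd fun i => Set.Ioo_subset_Icc_self (hα i)
  have hupper : discrepancy α u ≤ ENNReal.ofReal (1 + ((d : ℝ) - 2) * ‖α‖) :=
    hdiam ▸ horbit.discrepancy_le_ediam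
  have hlower : ENNReal.ofReal ((1 + ((d : ℝ) - 2) * ‖α‖) / 2) ≤ discrepancy α u := by
    rw [ENNReal.ofReal_div_of_pos two_pos, ← hdiam, ENNReal.ofReal_ofNat]
    exact ENNReal.div_le_of_le_mul'
      (horbit.ediam_le_two_mul_discrepancy hα0 hsum (hirr.restrict_scalars' ℤ))
  have hd' : (0 : ℝ) ≤ d - 2 := by simpa using hd
  refine ⟨hlower, hupper, hupper.trans (ENNReal.ofReal_le_ofReal ?_),
    (ENNReal.ofReal_le_ofReal ?_).trans hlower⟩
  · have hnorm : ‖α‖ ≤ 1 := (pi_norm_le_iff_of_nonneg zero_le_one).2 fun i => by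
      simpa [abs_of_nonneg (hα0 i)] using (hα i).2.le
    linarith [mul_le_mul_of_nonneg_left hnorm hd']
  · have : NeZero d := ⟨by omega⟩
    calc ((d : ℝ) - 1) / d = (1 + (d - 2) * (1 / d)) / 2 := by field_simp; ring
      _ ≤ (1 + (d - 2) * ‖α‖) / 2 := by
        gcongr
        exact one_div_card_le_norm_of_sum_eq_one hsum
end

section
/- Let α ∈ ℝ^d and T_α : 𝕋^d → 𝕋^d the translation x ↦ x + α mod ℤ^d. Suppose 𝕋^d = W_1 ∪ … ∪ W_k where the W_i have pairwise disjoint interiors and each W_i is the projection to the torus of a finite union of bounded convex polytopes in ℝ^d. Then there exists a constant C > 0 such that for every point x₀ ∈ 𝕋^d with T_α^n(x₀) ∈ int(W_{u_n}) for all n, the coding sequence u satisfies p_u(n) ≤ C·n^d for all n ≥ 1. -/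
/-- Projection of `ℝ^d` onto the torus `𝕋^d = (ℝ/ℤ)^d`. -/
noncomputable def torusProj (d : ℕ) (x : Fin d → ℝ) : Fin d → AddCircle (1:ℝ) :=
  fun i => (x i : AddCircle (1:ℝ))

/-!
Lift a point of the torus to the unit cube. In a bounded region of `ℝ^d` the preimages of the
pieces `W i` are finite unions of simplices, and inside the interiors only the full-dimensional
simplices matter. Hence finitely many affine functionals have signs which determine the piece.
A block of length `n` is therefore determined by the signs of the `O(n)` translates of these
functionals along the orbit.

The number of sign patterns of `N` affine functionals on `ℝ^d` is bounded without hyperplane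
arrangements. Functionals realizing all `2 ^ N` patterns have linearly independent linear parts,
so a shattered set has at most `d` elements and the Sauer–Shelah lemma leaves at most
`(N + 1) ^ d` patterns.
-/

open Set Module
open scoped Pointwise

section SignPatterns

theorem sum_choose_Iic_le_succ_pow (n m : ℕ) :
    ∑ k ∈ Finset.Iic m, n.choose k ≤ (n + 1) ^ m := by
  rw [add_pow, Nat.range_succ_eq_Iic]
  gcongr with k hk
  calc n.choose k ≤ n ^ k := Nat.choose_le_pow n k
    _ ≤ n ^ k * 1 ^ (m - k) * m.choose k := by
      rw [one_pow, mul_one]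
      exact Nat.le_mul_of_pos_right _ (Nat.choose_pos (Finset.mem_Iic.1 hk))

theorem card_le_succ_pow_of_shatters_card_le {ι : Type*} [Fintype ι] [DecidableEq ι]
    (𝒜 : Finset (Finset ι)) {m : ℕ} (h𝒜 : ∀ s, 𝒜.Shatters s → s.card ≤ m) :
    𝒜.card ≤ (Fintype.card ι + 1) ^ m := by
  have hvc : 𝒜.vcDim ≤ m := Finset.sup_le fun s hs => h𝒜 s (Finset.mem_shatterer.1 hs)
  calc 𝒜.card ≤ 𝒜.shatterer.card := 𝒜.card_le_card_shatterer
    _ ≤ ∑ k ∈ Finset.Iic 𝒜.vcDim, (Fintype.card ι).choose k :=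
      Finset.card_shatterer_le_sum_vcDim
    _ ≤ ∑ k ∈ Finset.Iic m, (Fintype.card ι).choose k :=
      Finset.sum_le_sum_of_subset (Finset.Iic_subset_Iic.2 hvc)
    _ ≤ (Fintype.card ι + 1) ^ m := sum_choose_Iic_le_succ_pow _ _

variable {𝕜 V P ι : Type*} [Field 𝕜] [LinearOrder 𝕜] [AddCommGroup V] [Module 𝕜 V]
  [AddTorsor V P]

/-- The sign pattern at `x` of a family of affine functionals, encoded as the set of indices
where the functional is nonnegative, so that zero counts as positive. It distinguishes the
open cells of the hyperplane arrangement given by the family. -/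
def nonnegPattern (l : ι → P →ᵃ[𝕜] 𝕜) (x : P) : Set ι :=
  {i | 0 ≤ l i x}

theorem mem_nonnegPattern {l : ι → P →ᵃ[𝕜] 𝕜} {x : P} {i : ι} :
    i ∈ nonnegPattern l x ↔ 0 ≤ l i x :=
  Iff.rfl

variable [IsStrictOrderedRing 𝕜]

theorem linearIndependent_linear_of_surjective_nonnegPattern {l : ι → P →ᵃ[𝕜] 𝕜}
    (hl : Function.Surjective (nonnegPattern l)) :
    LinearIndependent 𝕜 fun i => (l i).linear := by
  rw [linearIndependent_iff']
  intro s g hg i hi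
  by_contra hgi
  obtain ⟨y, hy⟩ := hl {j | 0 < g j}
  obtain ⟨z, hz⟩ := hl {j | g j < 0}
  have hy_iff (j : ι) : 0 ≤ l j y ↔ 0 < g j := Set.ext_iff.1 hy j
  have hz_iff (j : ι) : 0 ≤ l j z ↔ g j < 0 := Set.ext_iff.1 hz j
  have hpos (j : ι) (hj : g j ≠ 0) : 0 < g j * (l j y - l j z) := by
    rcases hj.lt_or_gt with hj_neg | hj_pos
    · have hy_neg : l j y < 0 := not_le.1 fun h => hj_neg.not_gt ((hy_iff j).1 h)
      exact mul_pos_of_neg_of_neg hj_neg (by linarith [(hz_iff j).2 hj_neg])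
    · have hz_neg : l j z < 0 := not_le.1 fun h => hj_pos.not_gt ((hz_iff j).1 h)
      exact mul_pos hj_pos (by linarith [(hy_iff j).2 hj_pos])
  have hzero : ∑ j ∈ s, g j * (l j y - l j z) = 0 := by
    simpa using LinearMap.congr_fun hg (y -ᵥ z)
  refine (Finset.sum_pos' (fun j _ => ?_) ⟨i, hi, hpos i hgi⟩).ne' hzero
  rcases eq_or_ne (g j) 0 with h | h
  · simp [h]
  · exact (hpos j h).le

theorem card_le_finrank_of_surjective_nonnegPattern [Fintype ι] [FiniteDimensional 𝕜 V]
    {l : ι → P →ᵃ[𝕜] 𝕜} (hl : Function.Surjective (nonnegPattern l)) :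
    Fintype.card ι ≤ finrank 𝕜 V := by
  simpa [finrank_linearMap] using
    (linearIndependent_linear_of_surjective_nonnegPattern hl).fintype_card_le_finrank

theorem ncard_range_nonnegPattern_le [Fintype ι] [FiniteDimensional 𝕜 V]
    (l : ι → P →ᵃ[𝕜] 𝕜) :
    (range (nonnegPattern l)).ncard ≤ (Fintype.card ι + 1) ^ finrank 𝕜 V := by
  classical
  let 𝒜 : Finset (Finset ι) := {s | (s : Set ι) ∈ range (nonnegPattern l)}
  have hrange : range (nonnegPattern l) = (fun s : Finset ι => (s : Set ι)) '' 𝒜 := by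
    ext A
    exact ⟨fun hA => ⟨A.toFinset, by simpa [𝒜] using hA, A.coe_toFinset⟩,
      by rintro ⟨s, hs, rfl⟩; simpa [𝒜] using hs⟩
  rw [hrange, ncard_image_of_injective _ Finset.coe_injective, ncard_coe_finset]
  refine card_le_succ_pow_of_shatters_card_le 𝒜 fun s hs => ?_
  rw [← Fintype.card_coe s]
  refine card_le_finrank_of_surjective_nonnegPattern (l := fun i : s => l i) fun T => ?_
  obtain ⟨A, hA, hsA⟩ := hs (Finset.map_subtype_subset T.toFinset)
  obtain ⟨x, hx⟩ := (Finset.mem_filter.1 hA).2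
  refine ⟨x, Set.ext fun i => ?_⟩
  have hiA : 0 ≤ l i x ↔ (i : ι) ∈ A := Set.ext_iff.1 hx i
  have hiT : (i : ι) ∈ s ∩ A ↔ i ∈ T := by rw [hsA]; simp
  simpa [mem_nonnegPattern, hiA] using hiT

end SignPatterns

section ClosureInterior

variable {X κ : Type*} [TopologicalSpace X]

theorem closure_interior_union_of_isClosed {A B : Set X} (hA : IsClosed A) :
    closure (interior (A ∪ B)) = closure (interior A) ∪ closure (interior B) := by
  refine (closure_minimal ?_ (isClosed_closure.union isClosed_closure)).antisymm
    (union_subset (closure_mono (interior_mono subset_union_left))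
      (closure_mono (interior_mono subset_union_right)))
  let V := interior (A ∪ B) \ (closure (interior A) ∪ closure (interior B))
  have hV : IsOpen V := isOpen_interior.sdiff (isClosed_closure.union isClosed_closure)
  have hVA : V ⊆ A := by
    intro x hx
    by_contra hxA
    have hVB : V \ A ⊆ interior B := interior_maximal
      (fun y hy => (interior_subset hy.1.1).resolve_left hy.2) (hV.sdiff hA)
    exact hx.2 (.inr (subset_closure (hVB ⟨hx, hxA⟩)))
  intro x hx
  by_contra hxV
  exact hxV (.inl (subset_closure (interior_maximal hVA hV ⟨hx, hxV⟩)))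

theorem closure_interior_biUnion_of_isClosed {C : κ → Set X} (hC : ∀ k, IsClosed (C k))
    (s : Finset κ) :
    closure (interior (⋃ k ∈ s, C k)) = ⋃ k ∈ s, closure (interior (C k)) := by
  classical
  induction s using Finset.induction_on with
  | empty => simp
  | insert k s _ ih =>
    rw [Finset.set_biUnion_insert, closure_interior_union_of_isClosed (hC k), ih,
      Finset.set_biUnion_insert]

theorem closure_interior_iUnion_of_isClosed [Finite κ] {C : κ → Set X}
    (hC : ∀ k, IsClosed (C k)) :
    closure (interior (⋃ k, C k)) = ⋃ k, closure (interior (C k)) := by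
  have := Fintype.ofFinite κ
  simpa using closure_interior_biUnion_of_isClosed hC Finset.univ

end ClosureInterior

section Polyhedral

variable {𝕜 E κ : Type*}

section Field

variable [Field 𝕜] [LinearOrder 𝕜] [AddCommGroup E] [Module 𝕜 E]

variable (𝕜) in
/-- A finite union of convex polyhedra, each a finite intersection of half-spaces `0 ≤ f`.
The encoding only records that membership is governed by the signs of finitely many affine
functionals: if those nonnegative at some point of `A` are also nonnegative at `y`, then
`y` lies in `A`. -/
def IsPolyhedral (A : Set E) : Prop :=
  ∃ F : Set (E →ᵃ[𝕜] 𝕜), F.Finite ∧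
    ∀ x ∈ A, ∀ y, (∀ f ∈ F, 0 ≤ f x → 0 ≤ f y) → y ∈ A

theorem isPolyhedral_empty : IsPolyhedral 𝕜 (∅ : Set E) :=
  ⟨∅, finite_empty, fun _ hx => hx.elim⟩

theorem IsPolyhedral.iUnion [Finite κ] {A : κ → Set E} (hA : ∀ k, IsPolyhedral 𝕜 (A k)) :
    IsPolyhedral 𝕜 (⋃ k, A k) := by
  choose F hF hFA using hA
  refine ⟨⋃ k, F k, finite_iUnion hF, fun x hx y hxy => ?_⟩
  obtain ⟨k, hk⟩ := mem_iUnion.1 hx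
  exact mem_iUnion.2 ⟨k, hFA k x hk y fun f hf => hxy f (mem_iUnion.2 ⟨k, hf⟩)⟩

theorem isPolyhedral_convexHull_range_affineBasis [IsStrictOrderedRing 𝕜] [Finite κ]
    (b : AffineBasis κ 𝕜 E) : IsPolyhedral 𝕜 (convexHull 𝕜 (range b)) := by
  refine ⟨range b.coord, finite_range _, fun x hx y hxy => ?_⟩
  rw [b.convexHull_eq_nonneg_coord] at hx ⊢
  exact fun k => hxy _ ⟨k, rfl⟩ (hx k)

end Field

variable [NormedAddCommGroup E] [NormedSpace ℝ E] [FiniteDimensional ℝ E]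

theorem isPolyhedral_closure_interior_convexHull_of_affineIndependent [Finite κ] {p : κ → E}
    (hp : AffineIndependent ℝ p) :
    IsPolyhedral ℝ (closure (interior (convexHull ℝ (range p)))) := by
  rcases (interior (convexHull ℝ (range p))).eq_empty_or_nonempty with hempty | hne
  · simpa [hempty] using isPolyhedral_empty
  · rw [(convex_convexHull ℝ _).closure_interior_eq_closure_of_nonempty_interior hne,
      ((finite_range p).isClosed_convexHull ℝ).closure_eq]
    exact isPolyhedral_convexHull_range_affineBasis
      ⟨p, hp, interior_convexHull_nonempty_iff_affineSpan_eq_top.1 hne⟩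

theorem isPolyhedral_closure_interior_convexHull {s : Set E} (hs : s.Finite) :
    IsPolyhedral ℝ (closure (interior (convexHull ℝ s))) := by
  let Simplices := {t : Finset E // ↑t ⊆ s ∧ AffineIndependent ℝ ((↑) : t → E)}
  have : Finite Simplices :=
    (hs.toFinset.powerset.finite_toSet.subset fun t ht => by simpa using ht.1).to_subtype
  have htriangulation : convexHull ℝ s = ⋃ t : Simplices, convexHull ℝ (t.1 : Set E) := by
    rw [convexHull_eq_union, iUnion_subtype]
    simp only [iUnion_and]
  rw [htriangulation, closure_interior_iUnion_of_isClosed fun t =>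
    t.1.finite_toSet.isClosed_convexHull ℝ]
  refine IsPolyhedral.iUnion fun t => ?_
  simpa using isPolyhedral_closure_interior_convexHull_of_affineIndependent t.2.2

theorem isPolyhedral_closure_interior_iUnion_convexHull [Finite κ] {s : κ → Set E}
    (hs : ∀ k, (s k).Finite) :
    IsPolyhedral ℝ (closure (interior (⋃ k, convexHull ℝ (s k)))) := by
  rw [closure_interior_iUnion_of_isClosed fun k => (hs k).isClosed_convexHull ℝ]
  exact IsPolyhedral.iUnion fun k => isPolyhedral_closure_interior_convexHull (hs k)

end Polyhedral

section Torus

variable {d : ℕ}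

theorem torusProj_add (x y : Fin d → ℝ) :
    torusProj d (x + y) = torusProj d x + torusProj d y :=
  rfl

theorem torusProj_eq_torusProj_iff {x y : Fin d → ℝ} :
    torusProj d x = torusProj d y ↔ ∃ z : Fin d → ℤ, x = (fun i => (z i : ℝ)) + y := by
  have hcoord (i : Fin d) : torusProj d x i = torusProj d y i ↔ ∃ n : ℤ, x i = n + y i := by
    rw [torusProj, torusProj, ← sub_eq_zero, ← AddCircle.coe_sub, AddCircle.coe_eq_zero_iff]
    simp [sub_eq_iff_eq_add, eq_comm]
  simp only [funext_iff, hcoord, Classical.skolem, Pi.add_apply]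

theorem continuous_torusProj : Continuous (torusProj d) :=
  continuous_pi fun i => (AddCircle.continuous_mk' 1).comp (continuous_apply i)

theorem isOpenMap_torusProj : IsOpenMap (torusProj d) :=
  IsOpenMap.piMap (fun _ => QuotientAddGroup.isOpenMap_coe)
    (.of_forall fun _ => QuotientAddGroup.mk_surjective)

theorem exists_mem_Icc_torusProj_eq (p : Fin d → AddCircle (1 : ℝ)) :
    ∃ x ∈ Icc (0 : Fin d → ℝ) 1, torusProj d x = p := by
  choose x hx hxp using fun i => AddCircle.eq_coe_Ico (p i)
  exact ⟨x, ⟨fun i => (hx i).1, fun i => (hx i).2.le⟩, funext hxp⟩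

theorem finite_setOf_intCast_mem {ι : Type*} [Finite ι] {B : Set (ι → ℝ)}
    (hB : Bornology.IsBounded B) : {z : ι → ℤ | (fun i => (z i : ℝ)) ∈ B}.Finite := by
  have := Fintype.ofFinite ι
  obtain ⟨R, hR⟩ := hB.subset_closedBall 0
  refine (isCompact_closedBall (0 : ι → ℤ) R).finite_of_discrete.subset fun z hz => ?_
  have hnorm : ‖fun i => (z i : ℝ)‖ = ‖z‖ := rfl
  rw [mem_closedBall_zero_iff, ← hnorm]
  exact mem_closedBall_zero_iff.1 (hR hz)

theorem exists_finite_translations_of_isBounded {U P : Set (Fin d → ℝ)}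
    (hU : Bornology.IsBounded U) (hP : Bornology.IsBounded P) :
    ∃ Z : Set (Fin d → ℤ), Z.Finite ∧ ∀ x ∈ U, ∀ y ∈ P, torusProj d x = torusProj d y →
      ∃ z ∈ Z, x = (fun i => (z i : ℝ)) + y := by
  refine ⟨_, finite_setOf_intCast_mem (hU.sub hP), fun x hx y hy hxy => ?_⟩
  obtain ⟨z, hz⟩ := torusProj_eq_torusProj_iff.1 hxy
  exact ⟨z, ⟨x, hx, y, hy, by simp [hz]⟩, hz⟩

theorem exists_isPolyhedral_lift {κ : Type*} [Finite κ] {K : Set (Fin d → ℝ)}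
    (hK : Bornology.IsBounded K) {W : Set (Fin d → AddCircle (1 : ℝ))}
    {s : κ → Set (Fin d → ℝ)} (hs : ∀ k, (s k).Finite)
    (hW : W = torusProj d '' ⋃ k, convexHull ℝ (s k)) :
    ∃ A, IsPolyhedral ℝ A ∧ K ∩ torusProj d ⁻¹' interior W ⊆ A ∧
      A ⊆ closure (torusProj d ⁻¹' interior W) := by
  obtain ⟨R, hKR⟩ := hK.subset_ball 0
  have hP : Bornology.IsBounded (⋃ k, convexHull ℝ (s k)) :=
    Bornology.isBounded_iUnion.2 fun k => ((hs k).isCompact_convexHull ℝ).isBounded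
  obtain ⟨Z, hZ, htranslate⟩ :=
    exists_finite_translations_of_isBounded (Metric.isBounded_ball (x := 0) (r := R)) hP
  have : Finite Z := hZ
  let v (z : Fin d → ℤ) : Fin d → ℝ := fun i => z i
  let T := ⋃ q : Z × κ, convexHull ℝ (v q.1 +ᵥ s q.2)
  have hball : Metric.ball 0 R ∩ torusProj d ⁻¹' interior W ⊆ T := by
    rintro x ⟨hxR, hxW⟩
    obtain ⟨y, hy, hyx⟩ := hW ▸ interior_subset hxW
    obtain ⟨z, hz, rfl⟩ := htranslate x hxR y hy hyx.symm
    obtain ⟨k, hk⟩ := mem_iUnion.1 hy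
    refine mem_iUnion.2 ⟨(⟨z, hz⟩, k), ?_⟩
    rw [convexHull_vadd]
    exact vadd_mem_vadd_set hk
  have hTW : T ⊆ torusProj d ⁻¹' W := by
    refine iUnion_subset fun q => ?_
    rw [convexHull_vadd, hW]
    rintro _ ⟨y, hy, rfl⟩
    have hproj : torusProj d (v q.1 + y) = torusProj d y :=
      torusProj_eq_torusProj_iff.2 ⟨q.1, rfl⟩
    exact ⟨y, mem_iUnion.2 ⟨q.2, hy⟩, hproj.symm⟩
  refine ⟨closure (interior T),
    isPolyhedral_closure_interior_iUnion_convexHull fun q => (hs q.2).vadd_set, ?_, ?_⟩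
  · have hopen : IsOpen (Metric.ball 0 R ∩ torusProj d ⁻¹' interior W) :=
      Metric.isOpen_ball.inter (isOpen_interior.preimage continuous_torusProj)
    exact (inter_subset_inter_left _ hKR).trans
      ((interior_maximal hball hopen).trans subset_closure)
  · rw [isOpenMap_torusProj.preimage_interior_eq_interior_preimage continuous_torusProj]
    exact closure_mono (interior_mono hTW)

end Torus

section Itineraries

variable {d : ℕ} {ι : Type*} [Finite ι] {W : ι → Set (Fin d → AddCircle (1 : ℝ))}

theorem exists_finite_affineMap_determine_piece {K : Set (Fin d → ℝ)}
    (hK : Bornology.IsBounded K)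
    (hWdisj : Pairwise fun i j => Disjoint (interior (W i)) (interior (W j)))
    (hWpoly : ∀ i, ∃ (m : ℕ) (S : Fin m → Finset (Fin d → ℝ)),
      W i = torusProj d '' ⋃ j, convexHull ℝ (S j : Set (Fin d → ℝ))) :
    ∃ F : Set ((Fin d → ℝ) →ᵃ[ℝ] ℝ), F.Finite ∧
      ∀ x ∈ K, ∀ y, (∀ f ∈ F, 0 ≤ f x → 0 ≤ f y) → ∀ i j,
        torusProj d x ∈ interior (W i) → torusProj d y ∈ interior (W j) → i = j := by
  have hlift (i : ι) : ∃ A, IsPolyhedral ℝ A ∧ K ∩ torusProj d ⁻¹' interior (W i) ⊆ A ∧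
      A ⊆ closure (torusProj d ⁻¹' interior (W i)) := by
    obtain ⟨m, S, hS⟩ := hWpoly i
    exact exists_isPolyhedral_lift hK (fun j => (S j).finite_toSet) hS
  choose A hA hKA hAW using hlift
  choose F hF hFA using hA
  refine ⟨⋃ i, F i, finite_iUnion hF, fun x hx y hxy i j hxi hyj => ?_⟩
  have hyA : y ∈ A i :=
    hFA i x (hKA i ⟨hx, hxi⟩) y fun f hf => hxy f (mem_iUnion.2 ⟨i, hf⟩)
  by_contra hij
  exact disjoint_left.1 (((hWdisj hij).preimage (torusProj d)).closure_left
    (isOpen_interior.preimage continuous_torusProj)) (hAW i hyA) hyj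

theorem exists_forall_ncard_itineraries_le
    (hWdisj : Pairwise fun i j => Disjoint (interior (W i)) (interior (W j)))
    (hWpoly : ∀ i, ∃ (m : ℕ) (S : Fin m → Finset (Fin d → ℝ)),
      W i = torusProj d '' ⋃ j, convexHull ℝ (S j : Set (Fin d → ℝ))) :
    ∃ N : ℕ, ∀ {τ : Type*} [Fintype τ] (a : τ → Fin d → AddCircle (1 : ℝ)),
      {w : τ → ι | ∃ p, ∀ t, p + a t ∈ interior (W (w t))}.ncard ≤
        (Fintype.card τ * N + 1) ^ d := by
  let Q : Set (Fin d → ℝ) := Icc 0 1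
  have hQ : Bornology.IsBounded Q := Metric.isBounded_Icc 0 1
  obtain ⟨F, hF, hFW⟩ := exists_finite_affineMap_determine_piece (hQ.add hQ) hWdisj hWpoly
  have := hF.fintype
  refine ⟨Fintype.card F, fun {τ} _ a => ?_⟩
  choose b hbQ hb using fun t => exists_mem_Icc_torusProj_eq (a t)
  let l (q : τ × F) : (Fin d → ℝ) →ᵃ[ℝ] ℝ :=
    q.2.1.comp (AffineEquiv.vaddConst ℝ (b q.1)).toAffineMap
  have hlift : ∀ w ∈ {w : τ → ι | ∃ p, ∀ t, p + a t ∈ interior (W (w t))},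
      ∃ x ∈ Q, ∀ t, torusProj d (x + b t) ∈ interior (W (w t)) := by
    rintro w ⟨p, hp⟩
    obtain ⟨x, hxQ, rfl⟩ := exists_mem_Icc_torusProj_eq p
    exact ⟨x, hxQ, fun t => by simpa only [torusProj_add, hb] using hp t⟩
  choose! x hxQ hx using hlift
  calc {w : τ → ι | ∃ p, ∀ t, p + a t ∈ interior (W (w t))}.ncard
      ≤ (range (nonnegPattern l)).ncard := by
        refine ncard_le_ncard_of_injOn (fun w => nonnegPattern l (x w))
          (fun w _ => mem_range_self _) (fun w hw w' hw' hww' => funext fun t => ?_)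
          (toFinite _)
        refine hFW _ (add_mem_add (hxQ w hw) (hbQ t)) _ (fun f hf hfx => ?_) _ _
          (hx w hw t) (hx w' hw' t)
        exact (Set.ext_iff.1 hww' (t, ⟨f, hf⟩)).1 hfx
    _ ≤ (Fintype.card τ * Fintype.card F + 1) ^ d := by
        simpa using ncard_range_nonnegPattern_le l

end Itineraries

theorem polytopal_coding_complexity_upper_bound_general {d : ℕ} {ι : Type*} [Finite ι]
    (W : ι → Set (Fin d → AddCircle (1 : ℝ)))
    (hWdisj : Pairwise fun i j => Disjoint (interior (W i)) (interior (W j)))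
    (hWpoly : ∀ i, ∃ (m : ℕ) (S : Fin m → Finset (Fin d → ℝ)),
      W i = torusProj d '' ⋃ j, convexHull ℝ (S j : Set (Fin d → ℝ))) :
    ∃ C : ℝ, 0 < C ∧ ∀ (a x₀ : Fin d → AddCircle (1 : ℝ)) (u : ℕ → ι),
      (∀ n : ℕ, (fun y => y + a)^[n] x₀ ∈ interior (W (u n))) →
      ∀ n : ℕ, 1 ≤ n →
        ({w : Fin n → ι | ∃ s : ℕ, ∀ t : Fin n, w t = u (s + t)}.ncard : ℝ) ≤
          C * (n : ℝ) ^ d := by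
  obtain ⟨N, hN⟩ := exists_forall_ncard_itineraries_le hWdisj hWpoly
  refine ⟨(N + 1) ^ d, by positivity, fun a x₀ u hu n hn => ?_⟩
  have hfactor : {w : Fin n → ι | ∃ s : ℕ, ∀ t : Fin n, w t = u (s + t)} ⊆
      {w | ∃ p, ∀ t : Fin n, p + t.1 • a ∈ interior (W (w t))} := by
    rintro w ⟨s, hw⟩
    refine ⟨x₀ + s • a, fun t => ?_⟩
    simpa only [hw, add_right_iterate, add_nsmul, add_assoc] using hu (s + t)
  have hcard : {w : Fin n → ι | ∃ s : ℕ, ∀ t : Fin n, w t = u (s + t)}.ncard ≤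
      ((N + 1) * n) ^ d :=
    calc _ ≤ _ := ncard_le_ncard hfactor
      _ ≤ (n * N + 1) ^ d := by simpa using hN fun t : Fin n => t.1 • a
      _ ≤ ((N + 1) * n) ^ d := Nat.pow_le_pow_left (by linarith) d
  rw [← mul_pow]
  exact_mod_cast hcard

theorem polytopal_coding_complexity_upper_bound {d k : ℕ}
    (α : Fin d → ℝ)
    (W : Fin k → Set (Fin d → AddCircle (1:ℝ)))
    (hWcover : (⋃ i, W i) = Set.univ)
    (hWdisj : ∀ i j, i ≠ j → Disjoint (interior (W i)) (interior (W j)))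
    (hWpoly : ∀ i, ∃ (m : ℕ) (S : Fin m → Finset (Fin d → ℝ)),
        W i = torusProj d '' (⋃ j, convexHull ℝ (S j : Set (Fin d → ℝ)))) :
    ∃ C : ℝ, 0 < C ∧
      ∀ (x₀ : Fin d → AddCircle (1:ℝ)) (u : ℕ → Fin k),
        (∀ n : ℕ, (fun y => y + torusProj d α)^[n] x₀ ∈ interior (W (u n))) →
        ∀ n : ℕ, 1 ≤ n →
          ({w : Fin n → Fin k | ∃ s : ℕ, ∀ t : Fin n, w t = u (s + t.1)}.ncard : ℝ)
            ≤ C * (n : ℝ) ^ d := by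
  obtain ⟨C, hC, hbound⟩ := polytopal_coding_complexity_upper_bound_general W hWdisj hWpoly
  exact ⟨C, hC, hbound (torusProj d α)⟩
end

section
/- Let α ∈ (0,1)^d be totally irrational and let u be the Tijdeman sequence with parameters (α, C, C', 0) where C = C' = 1 − (1 + min_i α_i)/(2d−2) and d ≥ 3. Then the discrepancy satisfies Δ_α(u) ≤ max{C, C'} = 1 − (1 + min_i α_i)/(2d−2) < 1 − 1/(2d−2). -/
/-- The piece `S_{α,C,C',i}` of Tijdeman's construction, as a predicate on points of
`1^⊥ ∩ [-C',∞)^d`. -/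
def inS {d : ℕ} (α : Fin d → ℝ) (C C' : ℝ) (i : Fin d) (x : Fin d → ℝ) : Prop :=
  (∑ j, x j = 0) ∧ (∀ j, -C' ≤ x j) ∧ (-C' ≤ x i + α i - 1) ∧
    ∀ j : Fin d, -C' ≤ x j + α j - 1 → (C - x i) / α i ≤ (C - x j) / α j

/-!
Suppose the deviation of some letter exceeds `C` at time `N`, and call a letter urgent at time `t`
if it would exceed `C` at time `N` when not used from time `t` on. Go back to the start `n` of the
last run of steps up to `N` at which the chosen letter is urgent, and let `J` be the set of letters
urgent at time `n`. All choices in the run lie in `J`, and a letter of `J` stays above `C - 1`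
because it is only used while above `C`; this bounds the total deviation over `J` at time `n` from
below. For `n = 0` this contradicts `C ≥ 1 - 1/d`. For `n > 0`, the letter chosen at time `n - 1`
was not urgent, so it lies outside `J`, and by Tijdeman's rule no letter of `J` was admissible then:
their deviations at time `n` are below `1 - C'`. If `n < N`, the two bounds contradict
`(d - 1) (2 - C - C') ≤ 1 + min α`. If `n = N`, the offending coordinate itself is below `1 - C'`;
since the coordinates sum to zero and are at least `-C'`, it is then at most `1 - 1/d ≤ C`.
-/

theorem exists_maximal_run (p : ℕ → Prop) (N : ℕ) :
    ∃ n ≤ N, (∀ t, n ≤ t → t < N → p t) ∧ ∀ m, n = m + 1 → ¬ p m := by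
  induction N with
  | zero => exact ⟨0, le_rfl, by simp, by simp⟩
  | succ N ih =>
    by_cases hN : p N
    · obtain ⟨n, hnN, hrun, hstart⟩ := ih
      refine ⟨n, hnN.trans N.le_succ, fun t hnt htN => ?_, hstart⟩
      rcases Nat.lt_succ_iff_lt_or_eq.mp htN with htN | rfl
      · exact hrun t hnt htN
      · exact hN
    · refine ⟨N + 1, le_rfl, fun t hNt htN => absurd htN hNt.not_gt, fun m hm => ?_⟩
      rwa [← Nat.succ_injective hm]

theorem one_sub_card_mul_lt_sum {ι : Type*} {J : Finset ι} {f : ι → ℝ} {c : ℝ} {k : ι}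
    (hk : k ∈ J) (hfk : c < f k) (hf : ∀ j ∈ J, c - 1 < f j) :
    1 - (J.card : ℝ) * (1 - c) < ∑ j ∈ J, f j := by
  classical
  calc 1 - (J.card : ℝ) * (1 - c)
      = ∑ j ∈ J, (c - 1 + if k = j then 1 else 0) := by
        rw [Finset.sum_add_distrib, Finset.sum_const, nsmul_eq_mul, Finset.sum_ite_eq, if_pos hk]
        ring
    _ < ∑ j ∈ J, f j := by
        refine Finset.sum_lt_sum_of_nonempty ⟨k, hk⟩ fun j hj => ?_
        split_ifs with h
        · subst h; linarith
        · linarith [hf j hj]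

theorem le_card_sub_one_mul_of_sum_eq_zero {ι : Type*} [Fintype ι] {x : ι → ℝ} {c : ℝ}
    (hsum : ∑ i, x i = 0) (hx : ∀ i, -c ≤ x i) (k : ι) :
    x k ≤ ((Fintype.card ι : ℝ) - 1) * c := by
  have hk : x k + c ≤ ∑ i, (x i + c) :=
    Finset.single_le_sum (f := fun i => x i + c)
      (fun i _ => neg_le_iff_add_nonneg.mp (hx i)) (Finset.mem_univ k)
  rw [Finset.sum_add_distrib, hsum, Finset.sum_const, Finset.card_univ, nsmul_eq_mul] at hk
  linarith

theorem le_one_sub_inv_card_of_sum_eq_zero {ι : Type*} [Fintype ι] {x : ι → ℝ} {c : ℝ} {k : ι}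
    (hsum : ∑ i, x i = 0) (hx : ∀ i, -c ≤ x i) (hk : x k ≤ 1 - c) :
    x k ≤ 1 - 1 / (Fintype.card ι : ℝ) := by
  have hcard : (1 : ℝ) ≤ Fintype.card ι := Nat.one_le_cast.mpr (Fintype.card_pos_iff.mpr ⟨k⟩)
  have hmul : Fintype.card ι * x k ≤ Fintype.card ι - 1 :=
    calc Fintype.card ι * x k = x k + (Fintype.card ι - 1) * x k := by ring
      _ ≤ (Fintype.card ι - 1) * c + (Fintype.card ι - 1) * (1 - c) := by
        gcongr
        exact le_card_sub_one_mul_of_sum_eq_zero hsum hx k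
      _ = Fintype.card ι - 1 := by ring
  rw [one_sub_div (by linarith), le_div_iff₀' (by linarith)]
  exact hmul

theorem sum_mul_add_card_mul_le {ι : Type*} [Fintype ι] {α : ι → ℝ} {r C : ℝ}
    (hα : ∀ i, 0 ≤ α i) (hsum : ∑ i, α i = 1) (hr : 0 ≤ r)
    (hC : 1 - 1 / (Fintype.card ι : ℝ) ≤ C) (J : Finset ι) :
    ∑ j ∈ J, r * α j + (J.card : ℝ) * (1 - C) ≤ 1 + r := by
  have hrate : ∑ j ∈ J, r * α j ≤ r := by
    rw [← Finset.mul_sum]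
    exact mul_le_of_le_one_right hr (hsum ▸ Finset.sum_le_univ_sum_of_nonneg hα)
  have hcard : (J.card : ℝ) * (1 - C) ≤ 1 :=
    calc (J.card : ℝ) * (1 - C) ≤ J.card * (1 / Fintype.card ι) := by
          gcongr
          linarith
      _ = J.card / Fintype.card ι := mul_one_div _ _
      _ ≤ 1 := div_le_one_of_le₀ (Nat.cast_le.mpr J.card_le_univ) (Nat.cast_nonneg _)
  linarith

section ResidualDemand

variable {ι : Type*} [DecidableEq ι]

/-- The demand `v` left unserved by the letters `u 0, …, u (t - 1)`. With `v = N • α`, the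
entry `i` is the deviation of `i` at time `N` if `i` is not used from time `t` on. -/
def residualDemand (v : ι → ℝ) (u : ℕ → ι) (t : ℕ) (i : ι) : ℝ :=
  v i - (((Finset.range t).filter fun s => u s = i).card : ℝ)

/-- The vector `nα − p(u_{[0,n)})`, whose sup norm defines the discrepancy of `u`. -/
def deviation (α : ι → ℝ) (u : ℕ → ι) (n : ℕ) : ι → ℝ :=
  residualDemand ((n : ℝ) • α) u n

variable (v α : ι → ℝ) (u : ℕ → ι)

theorem residualDemand_zero : residualDemand v u 0 = v := by
  ext i
  simp [residualDemand]

theorem residualDemand_succ (t : ℕ) :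
    residualDemand v u (t + 1) = residualDemand v u t - Pi.single (u t) 1 := by
  ext i
  rcases eq_or_ne (u t) i with rfl | h
  · simp [residualDemand, Finset.range_add_one, Finset.filter_insert, sub_sub]
  · simp [residualDemand, Finset.range_add_one, Finset.filter_insert, h, h.symm]

theorem residualDemand_antitone : Antitone (residualDemand v u) := by
  refine antitone_nat_of_succ_le fun t => ?_
  rw [residualDemand_succ, sub_le_self_iff, Pi.single_nonneg]
  exact zero_le_one

theorem residualDemand_smul (N n : ℕ) :
    residualDemand ((N : ℝ) • α) u n = deviation α u n + ((N : ℝ) - n) • α := by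
  ext i
  simp only [deviation, residualDemand, Pi.add_apply, Pi.smul_apply, smul_eq_mul]
  ring

theorem deviation_succ (n : ℕ) :
    deviation α u (n + 1) = deviation α u n + α - Pi.single (u n) 1 := by
  rw [deviation, residualDemand_succ, residualDemand_smul]
  simp

variable {α u}

theorem eq_deviation_of_succ {x : ℕ → ι → ℝ} (hzero : x 0 = 0)
    (hsucc : ∀ n, x (n + 1) = x n + α - Pi.single (u n) 1) (n : ℕ) : x n = deviation α u n := by
  induction n with
  | zero => simp [hzero, deviation, residualDemand_zero]
  | succ n ih => rw [hsucc, deviation_succ, ih]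

variable {v} {c : ℝ} {n N : ℕ}

theorem sub_one_lt_residualDemand {j : ι} (hnN : n ≤ N)
    (hrun : ∀ t, n ≤ t → t < N → c < residualDemand v u t (u t)) (hj : c < residualDemand v u n j) :
    c - 1 < residualDemand v u N j := by
  induction N, hnN using Nat.le_induction with
  | base => linarith
  | succ t hnt ih =>
    rw [residualDemand_succ, Pi.sub_apply]
    rcases eq_or_ne (u t) j with rfl | h
    · simpa using hrun t hnt t.lt_succ_self
    · simpa [h.symm] using ih fun s hns hst => hrun s hns (hst.trans t.lt_succ_self)

theorem sum_residualDemand_of_mem {J : Finset ι} (hnN : n ≤ N) (hJ : ∀ t, n ≤ t → t < N → u t ∈ J) :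
    ∑ j ∈ J, residualDemand v u N j = ∑ j ∈ J, residualDemand v u n j - ((N : ℝ) - n) := by
  induction N, hnN using Nat.le_induction with
  | base => simp
  | succ t hnt ih =>
    have hmem : u t ∈ J := hJ t hnt t.lt_succ_self
    have ih := ih fun s hns hst => hJ s hns (hst.trans t.lt_succ_self)
    simp only [residualDemand_succ, Pi.sub_apply, Finset.sum_sub_distrib, ih,
      Finset.sum_pi_single', if_pos hmem, Nat.cast_succ]
    ring

/-- The letters whose residual demand at time `n` exceeds `c`; for `v = N • α`, these are the
letters whose deviation would exceed `c` at time `N` if they were not used again after time `n`. -/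
noncomputable def urgent [Fintype ι] (v : ι → ℝ) (u : ℕ → ι) (c : ℝ) (n : ℕ) : Finset ι :=
  Finset.univ.filter fun j => c < residualDemand v u n j

theorem mem_urgent [Fintype ι] {j : ι} : j ∈ urgent v u c n ↔ c < residualDemand v u n j := by
  simp [urgent]

theorem one_add_lt_sum_urgent [Fintype ι] {k : ι} (hnN : n ≤ N)
    (hrun : ∀ t, n ≤ t → t < N → c < residualDemand v u t (u t)) (hk : c < residualDemand v u N k) :
    1 + ((N : ℝ) - n) <
      ∑ j ∈ urgent v u c n, residualDemand v u n j + ((urgent v u c n).card : ℝ) * (1 - c) := by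
  have hk_mem : k ∈ urgent v u c n :=
    mem_urgent.mpr (hk.trans_le (residualDemand_antitone v u hnN k))
  have hlower := one_sub_card_mul_lt_sum hk_mem hk fun j hj =>
    sub_one_lt_residualDemand hnN hrun (mem_urgent.mp hj)
  have hserved := sum_residualDemand_of_mem (v := v) hnN fun t hnt htN =>
    mem_urgent.mpr ((hrun t hnt htN).trans_le (residualDemand_antitone v u hnt (u t)))
  linarith

end ResidualDemand

section TijdemanSequence

variable {d : ℕ} {α : Fin d → ℝ} {C C' : ℝ} {u : ℕ → Fin d}

/-- `u` is a Tijdeman sequence with parameters `(α, C, C')` and starting point `0`; ties between the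
pieces may be broken arbitrarily, and differently at each step. -/
def IsTijdemanSequence (α : Fin d → ℝ) (C C' : ℝ) (u : ℕ → Fin d) : Prop :=
  ∀ n, inS α C C' (u n) (deviation α u n)

namespace IsTijdemanSequence

-- The quotients compared in the definition of `inS` are the times left before a coordinate
-- reaches `C`: an admissible letter whose time runs out before `N` is preferred to one that lasts.
theorem deviation_succ_lt (hu : IsTijdemanSequence α C C' u) (hα : ∀ i, 0 < α i)
    {N m : ℕ} {j : Fin d} (hm : residualDemand ((N : ℝ) • α) u m (u m) ≤ C)
    (hj : C < residualDemand ((N : ℝ) • α) u (m + 1) j) :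
    deviation α u (m + 1) j < 1 - C' := by
  have hj := hj.trans_le (residualDemand_antitone _ u m.le_succ j)
  have hne : u m ≠ j := fun h => hm.not_gt (h ▸ hj)
  rw [residualDemand_smul, Pi.add_apply, Pi.smul_apply, smul_eq_mul] at hm hj
  have hlasts : (N : ℝ) - m ≤ (C - deviation α u m (u m)) / α (u m) := by
    rw [le_div_iff₀ (hα _)]
    linarith
  have hrunsOut : (C - deviation α u m j) / α j < (N : ℝ) - m := by
    rw [div_lt_iff₀ (hα _)]
    linarith
  have hinadmissible : ¬ -C' ≤ deviation α u m j + α j - 1 := fun hadm =>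
    (hrunsOut.trans_le hlasts).not_ge ((hu m).2.2.2 j hadm)
  simp only [deviation_succ, Pi.sub_apply, Pi.add_apply, Pi.single_eq_of_ne hne.symm]
  linarith

theorem sum_urgent_add_one_le (hu : IsTijdemanSequence α C C' u) (hα : ∀ i, 0 < α i)
    (hsum : ∑ i, α i = 1) (hCC' : ∀ i, ((d : ℝ) - 1) * (2 - C - C') ≤ 1 + α i) {N m : ℕ}
    (hmN : m + 1 < N) (hm : residualDemand ((N : ℝ) • α) u m (u m) ≤ C) :
    ∑ j ∈ urgent ((N : ℝ) • α) u C (m + 1), residualDemand ((N : ℝ) • α) u (m + 1) j +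
      ((urgent ((N : ℝ) • α) u C (m + 1)).card : ℝ) * (1 - C) ≤ 1 + ((N : ℝ) - (m + 1 : ℕ)) := by
  set J := urgent ((N : ℝ) • α) u C (m + 1)
  have hnotMem : u m ∉ J := fun h =>
    (mem_urgent.mp h).not_ge ((residualDemand_antitone _ u m.le_succ (u m)).trans hm)
  have hdev : ∑ j ∈ J, deviation α u (m + 1) j ≤ (J.card : ℝ) * (1 - C') := by
    rw [← nsmul_eq_mul]
    exact Finset.sum_le_card_nsmul _ _ _ fun j hj =>
      (hu.deviation_succ_lt hα hm (mem_urgent.mp hj)).le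
  have hrate : ∑ j ∈ J, α j + α (u m) ≤ 1 := by
    rw [add_comm, ← Finset.sum_insert hnotMem, ← hsum]
    exact Finset.sum_le_univ_sum_of_nonneg fun i => (hα i).le
  have hcard : (J.card : ℝ) ≤ d - 1 := by
    have hlt : J.card < d := by
      simpa using Finset.card_lt_univ_of_notMem hnotMem
    rw [le_sub_iff_add_le]
    exact_mod_cast hlt
  have hslack : (J.card : ℝ) * (2 - C - C') ≤ 1 + α (u m) := by
    rcases le_total 0 (2 - C - C') with h | h
    · exact (mul_le_mul_of_nonneg_right hcard h).trans (hCC' (u m))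
    · exact (mul_nonpos_of_nonneg_of_nonpos J.card.cast_nonneg h).trans
        (by linarith [hα (u m)])
  have hgap : (1 : ℝ) ≤ (N : ℝ) - (m + 1 : ℕ) := by
    rw [le_sub_iff_add_le']
    exact_mod_cast hmN
  have hserved : α (u m) ≤ ((N : ℝ) - (m + 1 : ℕ)) * (1 - ∑ j ∈ J, α j) :=
    (le_sub_iff_add_le'.mpr hrate).trans
      (le_mul_of_one_le_left (by linarith [hα (u m)]) hgap)
  simp only [residualDemand_smul, Pi.add_apply, Pi.smul_apply, smul_eq_mul,
    Finset.sum_add_distrib, ← Finset.mul_sum]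
  linarith

theorem deviation_le (hu : IsTijdemanSequence α C C' u) (hα : ∀ i, 0 < α i) (hsum : ∑ i, α i = 1)
    (hC : 1 - 1 / (d : ℝ) ≤ C)
    (hCC' : ∀ i, ((d : ℝ) - 1) * (2 - C - C') ≤ 1 + α i) (N : ℕ) (k : Fin d) :
    deviation α u N k ≤ C := by
  by_contra! hk
  obtain ⟨n, hnN, hrun, hstart⟩ :=
    exists_maximal_run (fun t => C < residualDemand ((N : ℝ) • α) u t (u t)) N
  have hover := one_add_lt_sum_urgent hnN hrun hk
  rcases n with _ | m
  · refine hover.not_ge ?_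
    simpa [residualDemand_zero] using
      sum_mul_add_card_mul_le (fun i => (hα i).le) hsum N.cast_nonneg (by simpa using hC) _
  · have hm := not_lt.mp (hstart m rfl)
    rcases hnN.eq_or_lt with rfl | hmN
    · obtain ⟨hx_sum, hx_ge, -, -⟩ := hu (m + 1)
      have hk_le := le_one_sub_inv_card_of_sum_eq_zero hx_sum hx_ge
        (hu.deviation_succ_lt hα hm hk).le
      rw [Fintype.card_fin] at hk_le
      exact hk.not_ge (hk_le.trans hC)
    · exact hover.not_ge (hu.sum_urgent_add_one_le hα hsum hCC' hmN hm)

theorem norm_deviation_le (hu : IsTijdemanSequence α C C' u) (hα : ∀ i, 0 < α i)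
    (hsum : ∑ i, α i = 1) (hC : 1 - 1 / (d : ℝ) ≤ C)
    (hCC' : ∀ i, ((d : ℝ) - 1) * (2 - C - C') ≤ 1 + α i) (n : ℕ) :
    ‖deviation α u n‖ ≤ max C C' := by
  have hC'_nonneg : 0 ≤ C' := by
    simpa [deviation, residualDemand_zero] using (hu 0).2.1 (u 0)
  refine (pi_norm_le_iff_of_nonneg (hC'_nonneg.trans (le_max_right C C'))).mpr fun i => ?_
  exact abs_le.mpr ⟨(neg_le_neg (le_max_right C C')).trans ((hu n).2.1 i),
    (hu.deviation_le hα hsum hC hCC' n i).trans (le_max_left C C')⟩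

end IsTijdemanSequence

/-- The domain `1^⊥ ∩ [-C',∞)^d` of the Tijdeman map. -/
def tijdemanDomain (d : ℕ) (C' : ℝ) : Set (Fin d → ℝ) :=
  {x | ∑ i, x i = 0 ∧ ∀ i, -C' ≤ x i}

theorem inS.add_sub_single_mem {i : Fin d} {x : Fin d → ℝ} (hx : inS α C C' i x)
    (hα : ∀ i, 0 ≤ α i) (hsum : ∑ i, α i = 1) :
    x + α - Pi.single i 1 ∈ tijdemanDomain d C' := by
  obtain ⟨hx_sum, hx_ge, hi, -⟩ := hx
  refine ⟨by simp [Finset.sum_add_distrib, hx_sum, hsum], fun j => ?_⟩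
  rcases eq_or_ne j i with rfl | h
  · simpa using hi
  · simpa [h] using (hx_ge j).trans (le_add_of_nonneg_right (hα j))

theorem isTijdemanSequence_of_iterate (hα : ∀ i, 0 ≤ α i) (hsum : ∑ i, α i = 1) (hC' : 0 ≤ C')
    {T : (Fin d → ℝ) → (Fin d → ℝ)}
    (hT : ∀ x : Fin d → ℝ, ∑ i, x i = 0 → (∀ i, -C' ≤ x i) →
      ∃ i, inS α C C' i x ∧ T x = x + α - Pi.single i 1)
    (hu : ∀ n, T^[n + 1] (0 : Fin d → ℝ) = T^[n] 0 + α - Pi.single (u n) 1) :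
    IsTijdemanSequence α C C' u := by
  intro n
  have hinvariant : Set.MapsTo T (tijdemanDomain d C') (tijdemanDomain d C') := by
    rintro x ⟨hx_sum, hx_ge⟩
    obtain ⟨i, hi, hTx⟩ := hT x hx_sum hx_ge
    exact hTx ▸ hi.add_sub_single_mem hα hsum
  have hzero : (0 : Fin d → ℝ) ∈ tijdemanDomain d C' := ⟨by simp, fun _ => neg_nonpos.mpr hC'⟩
  obtain ⟨hn_sum, hn_ge⟩ := hinvariant.iterate n hzero
  obtain ⟨i, hi, hTn⟩ := hT _ hn_sum hn_ge
  have hsingle : (Pi.single (u n) 1 : Fin d → ℝ) = Pi.single i 1 := by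
    rw [← Function.iterate_succ_apply' T, hu] at hTn
    exact sub_right_injective hTn
  have hui : u n = i := by
    by_contra hne
    simpa [hne] using congrFun hsingle (u n)
  rwa [hui, ← eq_deviation_of_succ (x := fun n => T^[n] 0) rfl hu n]

end TijdemanSequence

section SymmetricParameter

variable {d : ℕ} {α : Fin d → ℝ}

/-- The common value `C = C'` of the Tijdeman parameters that makes
`(d - 1) * (2 - C - C') = 1 + min α`. -/
noncomputable def symmetricParameter (α : Fin d → ℝ) : ℝ :=
  1 - (1 + ⨅ i, α i) / (2 * (d : ℝ) - 2)

theorem one_sub_inv_le_symmetricParameter (hd : 3 ≤ d) (hsum : ∑ i, α i = 1) :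
    1 - 1 / (d : ℝ) ≤ symmetricParameter α := by
  have hd' : (3 : ℝ) ≤ d := by exact_mod_cast hd
  have hmin : (d : ℝ) * ⨅ i, α i ≤ 1 := by
    have := Finset.card_nsmul_le_sum Finset.univ α _ fun i _ =>
      ciInf_le (Set.finite_range α).bddBelow i
    simpa [hsum] using this
  rw [symmetricParameter, sub_le_sub_iff_left, div_le_div_iff₀ (by linarith) (by linarith)]
  linarith

theorem symmetricParameter_nonneg (hd : 3 ≤ d) (hsum : ∑ i, α i = 1) :
    0 ≤ symmetricParameter α :=
  (sub_nonneg.mpr (div_le_one_of_le₀ (Nat.one_le_cast.mpr (by lia)) d.cast_nonneg)).trans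
    (one_sub_inv_le_symmetricParameter hd hsum)

theorem symmetricParameter_mul_le (hd : 2 ≤ d) (i : Fin d) :
    ((d : ℝ) - 1) * (2 - symmetricParameter α - symmetricParameter α) ≤ 1 + α i := by
  have hd' : (2 : ℝ) ≤ d := by exact_mod_cast hd
  have hpos : 0 < (d : ℝ) - 1 := by linarith
  calc ((d : ℝ) - 1) * (2 - symmetricParameter α - symmetricParameter α)
      = 1 + ⨅ i, α i := by
        rw [symmetricParameter, ← mul_sub_one]
        field_simp
        ring
    _ ≤ 1 + α i := by
        gcongr
        exact ciInf_le (Set.finite_range α).bddBelow i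

theorem symmetricParameter_lt (hd : 2 ≤ d) (hα : ∀ i, 0 < α i) :
    symmetricParameter α < 1 - 1 / (2 * (d : ℝ) - 2) := by
  have hd' : (2 : ℝ) ≤ d := by exact_mod_cast hd
  have : Nonempty (Fin d) := ⟨⟨0, by lia⟩⟩
  obtain ⟨i, hi⟩ := exists_eq_ciInf_of_finite (f := α)
  have hmin : 0 < ⨅ i, α i := hi ▸ hα i
  rw [symmetricParameter, sub_lt_sub_iff_left]
  gcongr
  · linarith
  · linarith

end SymmetricParameter

theorem tijdeman_sequence_discrepancy_lt_Dd_general {d : ℕ} {α : Fin d → ℝ} (hα : ∀ i, 0 < α i)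
    (hsum : ∑ i, α i = 1) {C C' : ℝ} (hC : 1 - 1 / (d : ℝ) ≤ C) (hC' : 0 ≤ C')
    (hCC' : ∀ i, ((d : ℝ) - 1) * (2 - C - C') ≤ 1 + α i)
    (T : (Fin d → ℝ) → (Fin d → ℝ))
    (hT : ∀ x : Fin d → ℝ, ∑ i, x i = 0 → (∀ i, -C' ≤ x i) →
      ∃ i, inS α C C' i x ∧ T x = x + α - Pi.single i 1)
    (u : ℕ → Fin d)
    (hu : ∀ n, T^[n + 1] (0 : Fin d → ℝ) = T^[n] 0 + α - Pi.single (u n) 1) (n : ℕ) :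
    ‖fun i => (n : ℝ) * α i - (((Finset.range n).filter fun t => u t = i).card : ℝ)‖ ≤ max C C' :=
  (isTijdemanSequence_of_iterate (fun i => (hα i).le) hsum hC' hT hu).norm_deviation_le
    hα hsum hC hCC' n

theorem tijdeman_sequence_discrepancy_lt_Dd {d : ℕ} (hd : 3 ≤ d)
    (α : Fin d → ℝ) (hα : ∀ i, α i ∈ Set.Ioo (0:ℝ) 1) (hsum : ∑ i, α i = 1)
    (hirr : LinearIndependent ℚ α)
    (C : ℝ) (hC : C = 1 - (1 + ⨅ i, α i) / (2 * (d:ℝ) - 2))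
    (T : (Fin d → ℝ) → (Fin d → ℝ))
    -- `T` is the Tijdeman map with parameters `C = C'`, ties broken by smallest index
    (hT : ∀ x : Fin d → ℝ, (∑ i, x i = 0) → (∀ i, -C ≤ x i) →
      ∃ i : Fin d, inS α C C i x ∧ (∀ j : Fin d, inS α C C j x → i ≤ j) ∧
        T x = x + α - Pi.single i 1)
    (u : ℕ → Fin d)
    -- `u` is the Tijdeman sequence with starting point `x₀ = 0`
    (hu : ∀ n : ℕ, T^[n + 1] (0 : Fin d → ℝ) = T^[n] 0 + α - Pi.single (u n) 1) :
    (∀ n : ℕ,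
      ‖(fun i => (n:ℝ) * α i - (((Finset.range n).filter fun t => u t = i).card : ℝ))‖ ≤ C)
    ∧ C < 1 - 1 / (2 * (d:ℝ) - 2) := by
  obtain rfl : C = symmetricParameter α := hC
  have hpos (i : Fin d) : 0 < α i := (hα i).1
  refine ⟨fun n => ?_, symmetricParameter_lt (by lia) hpos⟩
  exact (tijdeman_sequence_discrepancy_lt_Dd_general hpos hsum
    (one_sub_inv_le_symmetricParameter hd hsum) (symmetricParameter_nonneg hd hsum)
    (symmetricParameter_mul_le (by lia)) T
    (fun x hx hx' => (hT x hx hx').imp fun _ h => ⟨h.1, h.2.2⟩) u hu n).trans_eq (max_self _)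
end
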